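/- arXiv:2406.03955 — 5 statements merged into one kernel-verified Lean document; each statement's English description precedes it below -/
import Mathlib

section
/- Let K be a field, O = K[x_1,…,x_n] the polynomial ring, and let φ_1,…,φ_k ∈ O be monic monomials of positive degree, say φ_i = x^{a_i} with exponent vector a_i : {1,…,n} → ℕ, a_i ≠ 0. If φ_1,…,φ_k is not a regular sequence, then there exist distinct indices i, j ∈ {1,…,k} and a variable index v with a_i(v) > 0 and a_j(v) > 0; equivalently, lcm(φ_i,φ_j) = x^{max(a_i,a_j)} (pointwise maximum of exponents) is not equal to the product φ_i·φ_j. -/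
/-- Lemma 5.7.
`O = K[x_1,…,x_n]`, `φ_i = x^{a i}` monic monomials of positive degree.
"Regular sequence" (as in the paper): for every `i`, the image of `φ_i` is a
non-zero-divisor in `O / ⟨φ_j : j < i⟩` (for `i = 0` this says `φ_0` is a
non-zero-divisor in `O`).  If `φ_1, …, φ_k` is *not* a regular sequence, then
there are distinct indices `i ≠ j` and a variable `v` occurring in both `φ_i`
and `φ_j`; equivalently `lcm(φ_i, φ_j) ≠ φ_i · φ_j`. -/
theorem stmt_0 {K : Type*} [Field K] (n k : ℕ)
    (a : Fin k → (Fin n →₀ ℕ)) (ha : ∀ i, a i ≠ 0)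
    (hreg : ¬ (∀ i : Fin k, ∀ x : MvPolynomial (Fin n) K,
        MvPolynomial.monomial (a i) (1 : K) * x ∈
          Ideal.span {p : MvPolynomial (Fin n) K |
            ∃ j : Fin k, j < i ∧ p = MvPolynomial.monomial (a j) (1 : K)} →
        x ∈ Ideal.span {p : MvPolynomial (Fin n) K |
            ∃ j : Fin k, j < i ∧ p = MvPolynomial.monomial (a j) (1 : K)})) :
    ∃ i j : Fin k, i ≠ j ∧ (∃ v : Fin n, 0 < a i v ∧ 0 < a j v) ∧
      MvPolynomial.monomial (a i ⊔ a j) (1 : K) ≠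
        MvPolynomial.monomial (a i) (1 : K) * MvPolynomial.monomial (a j) (1 : K) := by
  by_contra hcon
  apply hreg
  intro i x
  have hset : {p : MvPolynomial (Fin n) K |
      ∃ j : Fin k, j < i ∧ p = MvPolynomial.monomial (a j) (1 : K)} =
      (fun s => MvPolynomial.monomial s (1 : K)) '' {s | ∃ j : Fin k, j < i ∧ s = a j} := by
    ext p
    constructor
    · rintro ⟨j, hj, rfl⟩
      exact ⟨a j, ⟨j, hj, rfl⟩, rfl⟩
    · rintro ⟨s, ⟨j, hj, rfl⟩, rfl⟩
      exact ⟨j, hj, rfl⟩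
  rw [hset, MvPolynomial.mem_ideal_span_monomial_image,
    MvPolynomial.mem_ideal_span_monomial_image]
  intro h m hm
  obtain ⟨s, ⟨j, hj, rfl⟩, hs⟩ := h (a i + m) (by
    rw [MvPolynomial.mem_support_iff] at hm ⊢
    rw [MvPolynomial.coeff_monomial_mul, one_mul]
    exact hm)
  refine ⟨a j, ⟨j, hj, rfl⟩, ?_⟩
  intro v
  have hv := hs v
  rw [Finsupp.add_apply] at hv
  by_cases h1 : 0 < a i v
  · by_cases h2 : 0 < a j v
    · exfalso
      apply hcon
      refine ⟨i, j, hj.ne', ⟨v, h1, h2⟩, ?_⟩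
      rw [MvPolynomial.monomial_mul, one_mul]
      intro he
      have he2 := MvPolynomial.monomial_left_injective (one_ne_zero : (1 : K) ≠ 0) he
      have he3 := DFunLike.congr_fun he2 v
      rw [Finsupp.sup_apply, Finsupp.add_apply] at he3
      rcases max_choice (a i v) (a j v) with h4 | h4 <;> omega
    · omega
  · omega
end

section
/- The Taylor product is associative: for all subsets ρ, σ, τ ⊆ {1,…,k}, (e_ρ ⋆ e_σ) ⋆ e_τ = e_ρ ⋆ (e_σ ⋆ e_τ) in C (hence, by O-bilinearity, ⋆ is an associative product on C). -/
/-- `A_τ`: the pointwise maximum of the exponent vectors `a i`, `i ∈ τ`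
(so that `m_τ = x^{A_τ}` is the lcm of the monomials `φ_i = x^{a i}`, `i ∈ τ`). -/
def texp {n k : ℕ} (a : Fin k → Fin n → ℕ) (τ : Finset (Fin k)) : Fin n → ℕ :=
  fun v => τ.sup fun i => a i v

/-- the monic monomial `x^f` with exponent vector `f`. -/
noncomputable def monOf (K : Type*) [Field K] {n : ℕ} (f : Fin n → ℕ) :
    MvPolynomial (Fin n) K :=
  MvPolynomial.monomial (Finsupp.equivFunOnFinite.symm f) 1

/-- the Taylor product on basis elements:
`e_σ ⋆ e_τ = (−1)^{card{(i,j)∈σ×τ : i>j}} (m_σ m_τ / m_{σ∪τ}) e_{σ∪τ}` if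
`σ ∩ τ = ∅`, and `0` otherwise. -/
noncomputable def taylorStarBasis (K : Type*) [Field K] {n k : ℕ}
    (a : Fin k → Fin n → ℕ) (σ τ : Finset (Fin k)) :
    Finset (Fin k) →₀ MvPolynomial (Fin n) K :=
  if σ ∩ τ = ∅ then
    ((-1 : MvPolynomial (Fin n) K) ^ ((σ ×ˢ τ).filter fun p => p.2 < p.1).card *
        monOf K fun v => texp a σ v + texp a τ v - texp a (σ ∪ τ) v) •
      Finsupp.single (σ ∪ τ) 1
  else 0

/-- the Taylor product, extended `O`-bilinearly. -/
noncomputable def taylorStar (K : Type*) [Field K] {n k : ℕ} (a : Fin k → Fin n → ℕ) :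
    (Finset (Fin k) →₀ MvPolynomial (Fin n) K) →ₗ[MvPolynomial (Fin n) K]
      (Finset (Fin k) →₀ MvPolynomial (Fin n) K) →ₗ[MvPolynomial (Fin n) K]
        (Finset (Fin k) →₀ MvPolynomial (Fin n) K) :=
  Finsupp.lsum (MvPolynomial (Fin n) K) fun σ =>
    LinearMap.toSpanSingleton (MvPolynomial (Fin n) K) _
      (Finsupp.lsum (MvPolynomial (Fin n) K) fun τ =>
        LinearMap.toSpanSingleton (MvPolynomial (Fin n) K) _ (taylorStarBasis K a σ τ))

theorem tstar_single (K : Type*) [Field K] {n k : ℕ} (a : Fin k → Fin n → ℕ)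
    (σ τ : Finset (Fin k)) :
    taylorStar K a (Finsupp.single σ 1) (Finsupp.single τ 1) = taylorStarBasis K a σ τ := by
  simp [taylorStar, Finsupp.lsum_apply, LinearMap.toSpanSingleton_apply]

theorem monOf_mul (K : Type*) [Field K] {n : ℕ} (f g : Fin n → ℕ) :
    monOf K f * monOf K g = monOf K (fun v => f v + g v) := by
  unfold monOf
  rw [MvPolynomial.monomial_mul, one_mul]
  congr 2
  ext v
  simp

theorem texp_union {n k : ℕ} (a : Fin k → Fin n → ℕ) (σ τ : Finset (Fin k)) (v : Fin n) :
    texp a (σ ∪ τ) v = max (texp a σ v) (texp a τ v) := by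
  simp [texp, Finset.sup_union]

theorem inv_union_left {k : ℕ} (ρ σ τ : Finset (Fin k)) (h : ρ ∩ σ = ∅) :
    (((ρ ∪ σ) ×ˢ τ).filter fun p => p.2 < p.1).card =
      ((ρ ×ˢ τ).filter fun p => p.2 < p.1).card + ((σ ×ˢ τ).filter fun p => p.2 < p.1).card := by
  rw [Finset.union_product, Finset.filter_union, Finset.card_union_of_disjoint]
  apply Finset.disjoint_filter_filter
  rw [Finset.disjoint_product]
  exact Or.inl (Finset.disjoint_iff_inter_eq_empty.2 h)

theorem inv_union_right {k : ℕ} (ρ σ τ : Finset (Fin k)) (h : σ ∩ τ = ∅) :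
    ((ρ ×ˢ (σ ∪ τ)).filter fun p => p.2 < p.1).card =
      ((ρ ×ˢ σ).filter fun p => p.2 < p.1).card + ((ρ ×ˢ τ).filter fun p => p.2 < p.1).card := by
  rw [Finset.product_union, Finset.filter_union, Finset.card_union_of_disjoint]
  apply Finset.disjoint_filter_filter
  rw [Finset.disjoint_product]
  exact Or.inr (Finset.disjoint_iff_inter_eq_empty.2 h)

/-- the Taylor product is associative:
`(e_ρ ⋆ e_σ) ⋆ e_τ = e_ρ ⋆ (e_σ ⋆ e_τ)` for all `ρ, σ, τ ⊆ {1,…,k}`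
(hence, by `O`-bilinearity, `⋆` is an associative product on `C`). -/
theorem stmt_3 {K : Type*} [Field K] {n k : ℕ} (hn : 1 ≤ n) (hk : 1 ≤ k)
    (a : Fin k → Fin n → ℕ) (ρ σ τ : Finset (Fin k)) :
    taylorStar K a (taylorStar K a (Finsupp.single ρ 1) (Finsupp.single σ 1))
        (Finsupp.single τ 1) =
      taylorStar K a (Finsupp.single ρ 1)
        (taylorStar K a (Finsupp.single σ 1) (Finsupp.single τ 1)) := by
  rw [tstar_single, tstar_single]
  by_cases h1 : ρ ∩ σ = ∅ <;> by_cases h2 : σ ∩ τ = ∅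
  · rw [taylorStarBasis, if_pos h1, taylorStarBasis, if_pos h2, map_smul, map_smul,
      LinearMap.smul_apply, tstar_single, tstar_single]
    by_cases h3 : ρ ∩ τ = ∅
    · have h4 : (ρ ∪ σ) ∩ τ = ∅ := by rw [Finset.union_inter_distrib_right, h3, h2]; simp
      have h5 : ρ ∩ (σ ∪ τ) = ∅ := by rw [Finset.inter_union_distrib_left, h3, h1]; simp
      rw [taylorStarBasis, if_pos h4, taylorStarBasis, if_pos h5, smul_smul, smul_smul,
        inv_union_left _ _ _ h1, inv_union_right _ _ _ h2, Finset.union_assoc,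
        mul_mul_mul_comm, monOf_mul, mul_mul_mul_comm, monOf_mul, ← pow_add, ← pow_add]
      congr 2
      · congr 1
        ring
      · congr 1
        funext v
        simp only [texp_union]
        omega
    · have h4 : ¬ (ρ ∪ σ) ∩ τ = ∅ := by
        rw [Finset.union_inter_distrib_right, h2]; simpa using h3
      have h5 : ¬ ρ ∩ (σ ∪ τ) = ∅ := by
        rw [Finset.inter_union_distrib_left, h1]; simpa using h3
      rw [taylorStarBasis, if_neg h4, taylorStarBasis, if_neg h5, smul_zero, smul_zero]
  · have h5 : ¬ (ρ ∪ σ) ∩ τ = ∅ := by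
      rw [Finset.union_inter_distrib_right, Finset.union_eq_empty]; tauto
    rw [taylorStarBasis, if_pos h1, taylorStarBasis, if_neg h2, map_smul, map_zero,
      LinearMap.smul_apply, tstar_single, taylorStarBasis, if_neg h5, smul_zero]
  · have h5 : ¬ ρ ∩ (σ ∪ τ) = ∅ := by
      rw [Finset.inter_union_distrib_left, Finset.union_eq_empty]; tauto
    rw [taylorStarBasis, if_neg h1, taylorStarBasis, if_pos h2, map_smul, map_zero,
      LinearMap.zero_apply, tstar_single, taylorStarBasis, if_neg h5, smul_zero]
  · rw [taylorStarBasis, if_neg h1, taylorStarBasis, if_neg h2]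
    simp
end

section
/- Define μ : ℕ×ℕ → ℕ by: μ(i,j) = 0 if i and j are both odd; μ(i,j) = C((i+j)/2, j/2) if i and j are both even; μ(i,j) = C((i+j−1)/2, (j−1)/2) if i is even and j is odd; μ(i,j) = C((i+j−1)/2, (i−1)/2) if i is odd and j is even (C(n,k) is the binomial coefficient). Then μ(i,j) = μ(j,i) for all i, j ∈ ℕ, and μ(i,j)·μ(i+j,k) = μ(j,k)·μ(i,j+k) for all i, j, k ∈ ℕ. Consequently, for any commutative ring R the product e_i ⋆ e_j := μ(i,j)·e_{i+j} on the free R-module ⨁_{i≥0} R·e_i is associative and graded-commutative (e_i ⋆ e_j = (−1)^{ij} e_j ⋆ e_i, the sign referring to the grading |e_i| = i). -/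
/-- the multiplication table `μ(i,j)` of the two-periodic DGA:
`μ(i,j) = 0` if `i, j` both odd; `C((i+j)/2, j/2)` if both even;
`C((i+j−1)/2, (j−1)/2)` if `i` even, `j` odd;
`C((i+j−1)/2, (i−1)/2)` if `i` odd, `j` even. -/
def muCoef (i j : ℕ) : ℕ :=
  if Even i then
    if Even j then Nat.choose ((i + j) / 2) (j / 2)
    else Nat.choose ((i + j - 1) / 2) ((j - 1) / 2)
  else
    if Even j then Nat.choose ((i + j - 1) / 2) ((i - 1) / 2)
    else 0

/-- the product `e_i ⋆ e_j = μ(i,j) e_{i+j}` on the free `R`-module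
`⨁_{i ≥ 0} R e_i`, extended `R`-bilinearly. -/
noncomputable def muProd (R : Type*) [CommRing R] :
    (ℕ →₀ R) →ₗ[R] (ℕ →₀ R) →ₗ[R] (ℕ →₀ R) :=
  Finsupp.lsum R fun i => LinearMap.toSpanSingleton R ((ℕ →₀ R) →ₗ[R] (ℕ →₀ R))
    (Finsupp.lsum R fun j => LinearMap.toSpanSingleton R (ℕ →₀ R)
      ((muCoef i j : R) • Finsupp.single (i + j) (1 : R)))

theorem muCoef_eq (i j : ℕ) :
    muCoef i j = if i % 2 = 1 ∧ j % 2 = 1 then 0 else Nat.choose (i / 2 + j / 2) (i / 2) := by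
  unfold muCoef
  simp only [Nat.even_iff]
  split_ifs with h1 h2 h3 h4 h5 <;> try omega
  · rw [show (i + j) / 2 = i / 2 + j / 2 by omega]
    exact (Nat.choose_symm_add).symm
  · rw [show (i + j - 1) / 2 = i / 2 + j / 2 by omega, show (j - 1) / 2 = j / 2 by omega]
    exact (Nat.choose_symm_add).symm
  · rw [show (i + j - 1) / 2 = i / 2 + j / 2 by omega, show (i - 1) / 2 = i / 2 by omega]

theorem muCoef_symm (i j : ℕ) : muCoef i j = muCoef j i := by
  rw [muCoef_eq, muCoef_eq, Nat.add_comm (j / 2), Nat.choose_symm_add]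
  simp only [and_comm]

theorem choose_cocycle (a b c : ℕ) :
    Nat.choose (a + b) a * Nat.choose (a + b + c) (a + b) =
      Nat.choose (b + c) b * Nat.choose (a + (b + c)) a := by
  have h := Nat.choose_mul (n := a + b + c) (k := a + b) (s := a) (by omega)
  rw [show a + b + c - a = b + c by omega, show a + b - a = b by omega] at h
  rw [mul_comm, h, mul_comm, add_assoc]

theorem muCoef_cocycle (i j k : ℕ) :
    muCoef i j * muCoef (i + j) k = muCoef j k * muCoef i (j + k) := by
  simp only [muCoef_eq]
  by_cases hij : i % 2 = 1 ∧ j % 2 = 1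
  · rw [if_pos hij, zero_mul]
    by_cases hk : k % 2 = 1
    · rw [if_pos ⟨hij.2, hk⟩, zero_mul]
    · rw [if_pos (c := i % 2 = 1 ∧ (j + k) % 2 = 1) (by omega), mul_zero]
  · rw [if_neg hij]
    by_cases hjk : j % 2 = 1 ∧ k % 2 = 1
    · rw [if_pos hjk, zero_mul, if_pos (by omega), mul_zero]
    · rw [if_neg hjk]
      by_cases hik : i % 2 = 1 ∧ k % 2 = 1
      · rw [if_pos (by omega), if_pos (by omega), mul_zero, mul_zero]
      · rw [if_neg (by omega), if_neg (by omega), show (i + j) / 2 = i / 2 + j / 2 by omega,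
          show (j + k) / 2 = j / 2 + k / 2 by omega]
        exact choose_cocycle _ _ _

theorem muProd_single (R : Type*) [CommRing R] (i j : ℕ) (a b : R) :
    muProd R (Finsupp.single i a) (Finsupp.single j b) =
      Finsupp.single (i + j) (a * b * (muCoef i j : R)) := by
  simp only [muProd, Finsupp.lsum_single, LinearMap.toSpanSingleton_apply, LinearMap.smul_apply,
    Finsupp.smul_single, smul_eq_mul, mul_one, mul_assoc]

/-- `μ` is symmetric and satisfies the cocycle identity
`μ(i,j) μ(i+j,k) = μ(j,k) μ(i,j+k)`; consequently, for any commutative ring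
`R`, the product `e_i ⋆ e_j = μ(i,j) e_{i+j}` on `⨁_{i≥0} R e_i` is
associative and graded-commutative (`e_i ⋆ e_j = (−1)^{ij} e_j ⋆ e_i`). -/
theorem stmt_6 :
    (∀ i j : ℕ, muCoef i j = muCoef j i) ∧
    (∀ i j k : ℕ, muCoef i j * muCoef (i + j) k = muCoef j k * muCoef i (j + k)) ∧
    (∀ (R : Type) [CommRing R], ∀ x y z : ℕ →₀ R,
      muProd R (muProd R x y) z = muProd R x (muProd R y z)) ∧
    (∀ (R : Type) [CommRing R], ∀ i j : ℕ,
      muProd R (Finsupp.single i (1 : R)) (Finsupp.single j 1) =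
        (-1 : R) ^ (i * j) • muProd R (Finsupp.single j (1 : R)) (Finsupp.single i 1)) := by
  refine ⟨muCoef_symm, muCoef_cocycle, ?_, ?_⟩
  · intro R _ x y z
    induction x using Finsupp.induction_linear with
    | zero => simp
    | add f g hf hg => simp only [map_add, LinearMap.add_apply, hf, hg]
    | single i a =>
      induction y using Finsupp.induction_linear with
      | zero => simp
      | add f g hf hg => simp only [map_add, LinearMap.add_apply, hf, hg]
      | single j b =>
        induction z using Finsupp.induction_linear with
        | zero => simp
        | add f g hf hg => simp only [map_add, hf, hg]
        | single k c =>
          simp only [muProd_single, add_assoc]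
          congr 1
          have h := congrArg (Nat.cast (R := R)) (muCoef_cocycle i j k)
          push_cast at h
          linear_combination (a * b * c) * h
  · intro R _ i j
    rw [muProd_single, muProd_single, muCoef_symm j i, add_comm j i]
    by_cases hij : i % 2 = 1 ∧ j % 2 = 1
    · rw [muCoef_eq, if_pos hij]
      simp
    · have he : Even (i * j) := by
        rw [Nat.even_mul, Nat.even_iff, Nat.even_iff]
        omega
      rw [he.neg_one_pow, one_smul]
end

section
/- Let K be a field, O = K[x,y,z], and I = (x², xy, xz, y²) ⊆ O. With d₁ : O⁴ → O, d₁(f₁,f₂,f₃,f₄) = f₁x² + f₂xy + f₃xz + f₄y²; d₂ : O⁴ → O⁴, d₂(g₁,g₂,g₃,g₄) = (y g₂ + z g₃, −y g₁ − x g₂ + z g₄, −x g₃ − y g₄, x g₁); and d₃ : O → O⁴, d₃(h) = (0, z h, −y h, x h), one has: d₁∘d₂ = 0, d₂∘d₃ = 0, d₃ is injective, ker(d₂) = im(d₃), ker(d₁) = im(d₂), and im(d₁) = I. Hence 0 → O → O⁴ → O⁴ → O → O/I → 0 is a free O-module resolution of O/I of length three. -/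
open MvPolynomial in
theorem aux_mem (K : Type*) [Field K] (p : MvPolynomial (Fin 3) K) :
    p - aeval (![0, 0, X 2] : Fin 3 → MvPolynomial (Fin 3) K) p ∈
      Ideal.span {(X 0 : MvPolynomial (Fin 3) K), X 1} := by
  rw [← Ideal.Quotient.eq]
  have h : (Ideal.Quotient.mkₐ K (Ideal.span {(X 0 : MvPolynomial (Fin 3) K), X 1})) =
      (Ideal.Quotient.mkₐ K (Ideal.span {(X 0 : MvPolynomial (Fin 3) K), X 1})).comp
        (aeval (![0, 0, X 2] : Fin 3 → MvPolynomial (Fin 3) K)) := by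
    apply MvPolynomial.algHom_ext
    intro i
    fin_cases i
    · simp [Ideal.Quotient.eq_zero_iff_mem]
      exact Ideal.subset_span (by simp)
    · simp [Ideal.Quotient.eq_zero_iff_mem]
      exact Ideal.subset_span (by simp)
    · simp
  exact congrArg (fun f => f p) h

open MvPolynomial in
theorem aux_dvd (K : Type*) [Field K] (i j : Fin 3) (hij : i ≠ j) (p : MvPolynomial (Fin 3) K)
    (h : (X i : MvPolynomial (Fin 3) K) ∣ X j * p) : (X i : MvPolynomial (Fin 3) K) ∣ p := by
  have hp : Prime (X i : MvPolynomial (Fin 3) K) := MvPolynomial.X_prime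
  rcases hp.dvd_or_dvd h with h | h
  · rw [MvPolynomial.X_dvd_X] at h
    simp_all
  · exact h

open MvPolynomial in
theorem aux_koszul (K : Type*) [Field K] (A B C : MvPolynomial (Fin 3) K)
    (h : X 0 * A + X 1 * B + X 2 * C = 0) :
    ∃ a b c, A = X 1 * a + X 2 * b ∧ B = -(X 0 * a) + X 2 * c ∧ C = -(X 0 * b) - X 1 * c := by
  have h1 := congrArg (aeval (![0, 0, X 2] : Fin 3 → MvPolynomial (Fin 3) K)) h
  simp at h1
  have h2 := aux_mem K C
  rw [aeval_eq_bind₁] at h2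
  rw [h1, sub_zero, Ideal.mem_span_pair] at h2
  obtain ⟨b, c, hC⟩ := h2
  have h3 : (X 0 : MvPolynomial (Fin 3) K) ∣ X 1 * (B + X 2 * c) :=
    ⟨-(A + X 2 * b), by linear_combination h + X 2 * hC⟩
  obtain ⟨a, ha⟩ := aux_dvd K 0 1 (by decide) _ h3
  refine ⟨-a, -b, -c, ?_, by linear_combination ha, by linear_combination -hC⟩
  apply mul_left_cancel₀ (X_ne_zero (R := K) (0 : Fin 3))
  linear_combination h + X 2 * hC - X 1 * ha

/-- Example 4.2: over `O = K[x,y,z]`, with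
`I = (x², xy, xz, y²)`, the maps
`d₁(f₁,f₂,f₃,f₄) = f₁x² + f₂xy + f₃xz + f₄y²`,
`d₂(g₁,g₂,g₃,g₄) = (y g₂ + z g₃, −y g₁ − x g₂ + z g₄, −x g₃ − y g₄, x g₁)` and
`d₃(h) = (0, z h, −y h, x h)` satisfy `d₁∘d₂ = 0`, `d₂∘d₃ = 0`, `d₃` injective,
`ker d₂ = im d₃`, `ker d₁ = im d₂`, and `im d₁ = I`; hence
`0 → O → O⁴ → O⁴ → O → O/I → 0` is a free `O`-module resolution of `O/I` of
length three. -/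
theorem stmt_9 (K : Type*) [Field K] :
    let O := MvPolynomial (Fin 3) K
    let x : O := MvPolynomial.X 0
    let y : O := MvPolynomial.X 1
    let z : O := MvPolynomial.X 2
    let I : Ideal O := Ideal.span {x ^ 2, x * y, x * z, y ^ 2}
    let d1 : (Fin 4 → O) → O := fun f =>
      f 0 * x ^ 2 + f 1 * (x * y) + f 2 * (x * z) + f 3 * y ^ 2
    let d2 : (Fin 4 → O) → (Fin 4 → O) := fun g =>
      ![y * g 1 + z * g 2, -(y * g 0) - x * g 1 + z * g 3,
        -(x * g 2) - y * g 3, x * g 0]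
    let d3 : O → (Fin 4 → O) := fun h => ![0, z * h, -(y * h), x * h]
    (∀ g, d1 (d2 g) = 0) ∧
    (∀ h, d2 (d3 h) = 0) ∧
    Function.Injective d3 ∧
    (∀ g, d2 g = 0 ↔ ∃ h, d3 h = g) ∧
    (∀ f, d1 f = 0 ↔ ∃ g, d2 g = f) ∧
    (∀ p, (∃ f, d1 f = p) ↔ p ∈ I) := by
  intro O x y z I d1 d2 d3
  have hx : x ≠ 0 := MvPolynomial.X_ne_zero _
  have hz : z ≠ 0 := MvPolynomial.X_ne_zero _
  have h12 : ∀ g, d1 (d2 g) = 0 := by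
    intro g
    simp [d1, d2]
    ring
  have h23 : ∀ h, d2 (d3 h) = 0 := by
    intro h
    ext1 i
    fin_cases i <;> simp [d2, d3] <;> ring
  refine ⟨h12, h23, ?_, ?_, ?_, ?_⟩
  · intro a b hab
    have := congrFun hab 3
    simp [d3] at this
    exact this.resolve_right hx
  · intro g
    refine ⟨fun hg => ?_, ?_⟩
    · have e0 : y * g 1 + z * g 2 = 0 := congrFun hg 0
      have e1 : -(y * g 0) - x * g 1 + z * g 3 = 0 := congrFun hg 1
      have e3 : x * g 0 = 0 := congrFun hg 3
      have g0 : g 0 = 0 := (mul_eq_zero.mp e3).resolve_left hx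
      rw [g0] at e1
      obtain ⟨h, hh⟩ : z ∣ g 1 := aux_dvd K 2 0 (by decide) _ ⟨g 3, by linear_combination -e1⟩
      have h2 : g 2 = -(y * h) := by
        apply mul_left_cancel₀ hz
        linear_combination e0 - y * hh
      have h3 : g 3 = x * h := by
        apply mul_left_cancel₀ hz
        linear_combination e1 + x * hh
      refine ⟨h, ?_⟩
      ext1 i
      fin_cases i
      · exact g0.symm
      · exact hh.symm
      · exact h2.symm
      · exact h3.symm
    · rintro ⟨h, rfl⟩
      exact h23 h
  · intro f
    refine ⟨fun hf => ?_, ?_⟩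
    · have e : f 0 * x ^ 2 + f 1 * (x * y) + f 2 * (x * z) + f 3 * y ^ 2 = 0 := hf
      obtain ⟨g, hg⟩ : x ∣ f 3 := by
        apply aux_dvd K 0 1 (by decide)
        apply aux_dvd K 0 1 (by decide)
        exact ⟨-(f 0 * x + f 1 * y + f 2 * z), by linear_combination e⟩
      have e' : x * f 0 + y * (f 1 + y * g) + z * f 2 = 0 := by
        apply mul_left_cancel₀ hx
        linear_combination e - y ^ 2 * hg
      obtain ⟨a, b, c, h0, h1, h2⟩ := aux_koszul K _ _ _ e'
      refine ⟨![g, a, b, c], ?_⟩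
      ext1 i
      fin_cases i
      · exact h0.symm
      · change -(y * g) - x * a + z * c = f 1
        linear_combination -h1
      · exact h2.symm
      · exact hg.symm
    · rintro ⟨g, rfl⟩
      exact h12 g
  · intro p
    simp only [I, Ideal.mem_span_insert, Ideal.mem_span_singleton']
    constructor
    · rintro ⟨f, rfl⟩
      exact ⟨f 0, _, ⟨f 1, _, ⟨f 2, _, ⟨f 3, rfl⟩, rfl⟩, rfl⟩, by simp only [d1]; ring⟩
    · rintro ⟨a, _, ⟨b, _, ⟨c, _, ⟨d, rfl⟩, rfl⟩, rfl⟩, rfl⟩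
      refine ⟨![a, b, c, d], ?_⟩
      change a * x ^ 2 + b * (x * y) + c * (x * z) + d * y ^ 2 = _
      ring
end

section
/- Let K be a field, O = K[x,y,z,w], and I = (x², xy, y²z², zw, w²) ⊆ O. Consider the complex 0 → O → O⁵ → O⁸ → O⁵ → O with O-linear differentials given on bases as follows: d₁ on the basis π^a, π^b, π^c, π^d, π^e of O⁵ by π^a ↦ x², π^b ↦ xy, π^c ↦ y²z², π^d ↦ wz, π^e ↦ w²; d₂ on the basis π^{ab}, π^{ad}, π^{ae}, π^{bc}, π^{bd}, π^{be}, π^{cd}, π^{de} of O⁸ by π^{ab} ↦ xπ^b − yπ^a, π^{ad} ↦ x²π^d − wzπ^a, π^{ae} ↦ x²π^e − w²π^a, π^{bc} ↦ xπ^c − yz²π^b, π^{bd} ↦ xyπ^d − wzπ^b, π^{be} ↦ xyπ^e − w²π^b, π^{cd} ↦ y²zπ^d − wπ^c, π^{de} ↦ zπ^e − wπ^d; d₃ on the basis π^{abd}, π^{abe}, π^{ade}, π^{bde}, π^{bcd} of O⁵ by π^{abd} ↦ wzπ^{ab} + xπ^{bd} − yπ^{ad}, π^{abe} ↦ w²π^{ab}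 + xπ^{be} − yπ^{ae}, π^{ade} ↦ x²π^{de} + wπ^{ad} − zπ^{ae}, π^{bde} ↦ xyπ^{de} + wπ^{bd} − zπ^{be}, π^{bcd} ↦ wπ^{bc} + xπ^{cd} − yzπ^{bd}; and d₄ on the basis π^{abde} of O by π^{abde} ↦ −wπ^{abd} + zπ^{abe} − yπ^{ade} + xπ^{bde}. Then consecutive compositions vanish, d₄ is injective, ker(d₃) = im(d₄), ker(d₂) = im(d₃), ker(d₁) = im(d₂), and im(d₁) = I; hence this complex is a free O-module resolution of O/I of length four. -/
open MvPolynomial in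
theorem colonX {K : Type*} [Field K] {s : Set (Fin 4)} {j : Fin 4} (hj : j ∉ s)
    {f : MvPolynomial (Fin 4) K}
    (h : X j * f ∈ Ideal.span (X '' s : Set (MvPolynomial (Fin 4) K))) :
    f ∈ Ideal.span (X '' s : Set (MvPolynomial (Fin 4) K)) := by
  rw [mem_ideal_span_X_image] at h ⊢
  intro m hm
  obtain ⟨i, hi, hne⟩ := h (Finsupp.single j 1 + m) (by
    rw [mem_support_iff, coeff_X_mul]
    exact mem_support_iff.1 hm)
  refine ⟨i, hi, ?_⟩
  have hij : j ≠ i := fun e => hj (e ▸ hi)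
  simpa [Finsupp.single_apply, hij] using hne

open MvPolynomial in
theorem colon1 {K : Type*} [Field K] {j k : Fin 4} (hj : j ≠ k)
    {f a : MvPolynomial (Fin 4) K} (h : X j * f = X k * a) :
    ∃ c, f = X k * c ∧ a = X j * c := by
  have := colonX (K := K) (s := {k}) (j := j) (f := f) (by simpa using hj) (by
    rw [Set.image_singleton, Ideal.mem_span_singleton]; exact ⟨a, h⟩)
  rw [Set.image_singleton, Ideal.mem_span_singleton] at this
  obtain ⟨c, rfl⟩ := this
  refine ⟨c, rfl, ?_⟩
  have hk : (X k : MvPolynomial (Fin 4) K) ≠ 0 := X_ne_zero k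
  apply mul_left_cancel₀ hk
  rw [← h]; ring

open MvPolynomial in
theorem colon2 {K : Type*} [Field K] {j k l : Fin 4} (hj : j ≠ k) (hl : j ≠ l)
    {f a b : MvPolynomial (Fin 4) K} (h : X j * f = X k * a + X l * b) :
    ∃ c d, f = X k * c + X l * d := by
  have := colonX (K := K) (s := {k, l}) (j := j) (f := f) (by simp [hj, hl]) (by
    rw [Set.image_pair, Ideal.mem_span_pair]; exact ⟨a, b, by rw [h]; ring⟩)
  rw [Set.image_pair, Ideal.mem_span_pair] at this
  obtain ⟨c, d, e⟩ := this
  exact ⟨c, d, by rw [← e]; ring⟩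

open MvPolynomial in
theorem colon3 {K : Type*} [Field K] {j k l m : Fin 4} (hj : j ≠ k) (hl : j ≠ l) (hm : j ≠ m)
    {f a b c : MvPolynomial (Fin 4) K} (h : X j * f = X k * a + X l * b + X m * c) :
    ∃ p q r, f = X k * p + X l * q + X m * r := by
  have key : ∀ g : MvPolynomial (Fin 4) K,
      g ∈ Ideal.span (X '' ({k, l, m} : Set (Fin 4)) : Set (MvPolynomial (Fin 4) K)) ↔
      ∃ p q r, g = X k * p + X l * q + X m * r := by
    intro g
    rw [Set.image_insert_eq, Set.image_pair]
    refine Submodule.mem_span_triple.trans ?_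
    constructor
    · rintro ⟨p, q, r, e⟩
      exact ⟨p, q, r, by rw [← e]; simp only [smul_eq_mul]; ring⟩
    · rintro ⟨p, q, r, e⟩
      exact ⟨p, q, r, by rw [e]; simp only [smul_eq_mul]; ring⟩
  exact (key f).1 (colonX (by simp [hj, hl, hm]) ((key _).2 ⟨a, b, c, h⟩))

open MvPolynomial in
theorem exact3 {K : Type*} [Field K] {x y z w h0 h1 h2 h3 h4 : MvPolynomial (Fin 4) K}
    (hx : x = X 0) (hz : z = X 2)
    (e2 : -(y * h1) - z * h2 = 0) 
    (e4 : x * h0 + w * h3 - y * z * h4 = 0) (e5 : x * h1 - z * h3 = 0) (e6 : x * h4 = 0) :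
    ∃ p, -(w * p) = h0 ∧ z * p = h1 ∧ -(y * p) = h2 ∧ x * p = h3 ∧ 0 = h4 := by
  have x0 : x ≠ 0 := hx ▸ X_ne_zero 0
  have z0 : z ≠ 0 := hz ▸ X_ne_zero 2
  have h40 : h4 = 0 := by simpa [x0] using e6
  obtain ⟨p, hp1, hp3⟩ := colon1 (K := K) (j := 0) (k := 2) (f := h1) (a := h3) (by decide)
    (by rw [← hx, ← hz]; linear_combination e5)
  rw [← hz] at hp1
  rw [← hx] at hp3
  refine ⟨p, ?_, hp1.symm, ?_, hp3.symm, h40.symm⟩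
  · apply mul_left_cancel₀ x0
    linear_combination -e4 + w * hp3 - y * z * h40
  · apply mul_left_cancel₀ z0
    linear_combination e2 + y * hp1

open MvPolynomial in
theorem exact2 {K : Type*} [Field K] {x y z w g0 g1 g2 g3 g4 g5 g6 g7 : MvPolynomial (Fin 4) K}
    (hx : x = X 0) (hz : z = X 2) (hw : w = X 3)
    (e0 : -(y * g0) - w * z * g1 - w ^ 2 * g2 = 0)
    (e1 : x * g0 - y * z ^ 2 * g3 - w * z * g4 - w ^ 2 * g5 = 0)
    (e2 : x * g3 - w * g6 = 0)
    (e3 : x ^ 2 * g1 + x * y * g4 + y ^ 2 * z * g6 - w * g7 = 0) :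
    ∃ h0 h1 h2 h3 h4, w * z * h0 + w ^ 2 * h1 = g0 ∧
        -(y * h0) + w * h2 = g1 ∧
        -(y * h1) - z * h2 = g2 ∧
        w * h4 = g3 ∧
        x * h0 + w * h3 - y * z * h4 = g4 ∧
        x * h1 - z * h3 = g5 ∧
        x * h4 = g6 ∧
        x ^ 2 * h2 + x * y * h3 = g7 := by
  have x0 : x ≠ 0 := hx ▸ X_ne_zero 0
  have w0 : w ≠ 0 := hw ▸ X_ne_zero 3
  obtain ⟨h4, a3, a6⟩ := colon1 (K := K) (j := 0) (k := 3) (f := g3) (a := g6) (by decide)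
    (by rw [← hx, ← hw]; linear_combination e2)
  rw [← hw] at a3
  rw [← hx] at a6
  obtain ⟨m, am, bm⟩ := colon1 (K := K) (j := 0) (k := 3) (f := g0)
    (a := z * (g4 + y * z * h4) + w * g5) (by decide)
    (by rw [← hx, ← hw]; linear_combination e1 + y * z ^ 2 * a3)
  rw [← hw] at am
  rw [← hx] at bm
  obtain ⟨h0, h1, hm⟩ := colon2 (K := K) (j := 0) (k := 2) (l := 3) (f := m)
    (a := g4 + y * z * h4) (b := g5) (by decide) (by decide)
    (by rw [← hx, ← hw, ← hz]; exact bm.symm)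
  rw [← hz, ← hw] at hm
  obtain ⟨h2, b1, b2⟩ := colon1 (K := K) (j := 2) (k := 3) (f := g1 + y * h0)
    (a := -(g2 + y * h1)) (by decide)
    (by
      rw [← hz, ← hw]
      apply mul_left_cancel₀ w0
      linear_combination -e0 - y * am - y * w * hm)
  obtain ⟨h3, b4, b5⟩ := colon1 (K := K) (j := 2) (k := 3) (f := g4 + y * z * h4 - x * h0)
    (a := -(g5 - x * h1)) (by decide)
    (by rw [← hz, ← hw]; linear_combination bm + x * hm)
  rw [← hw] at b1 b4
  rw [← hz] at b2 b5
  refine ⟨h0, h1, h2, h3, h4, ?_, ?_, ?_, a3.symm, ?_, ?_, a6.symm, ?_⟩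
  · linear_combination -am - w * hm
  · linear_combination -b1
  · linear_combination b2
  · linear_combination -b4
  · linear_combination b5
  · apply mul_left_cancel₀ w0
    linear_combination e3 - x ^ 2 * b1 - x * y * b4 - y ^ 2 * z * a6

open MvPolynomial in
theorem exact1 {K : Type*} [Field K] {x y z w f0 f1 f2 f3 f4 : MvPolynomial (Fin 4) K}
    (hx : x = X 0) (hy : y = X 1) (hz : z = X 2) (hw : w = X 3)
    (e : f0 * x ^ 2 + f1 * (x * y) + f2 * (y ^ 2 * z ^ 2) + f3 * (z * w) + f4 * w ^ 2 = 0) :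
    ∃ g0 g1 g2 g3 g4 g5 g6 g7,
        -(y * g0) - w * z * g1 - w ^ 2 * g2 = f0 ∧
        x * g0 - y * z ^ 2 * g3 - w * z * g4 - w ^ 2 * g5 = f1 ∧
        x * g3 - w * g6 = f2 ∧
        x ^ 2 * g1 + x * y * g4 + y ^ 2 * z * g6 - w * g7 = f3 ∧
        x ^ 2 * g2 + x * y * g5 + z * g7 = f4 := by
  obtain ⟨a1, a2, ha⟩ := colon2 (K := K) (j := 1) (k := 0) (l := 3) (f := y * z ^ 2 * f2)
    (a := -(f0 * x + f1 * y)) (b := -(f3 * z + f4 * w)) (by decide) (by decide)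
    (by rw [← hx, ← hw, ← hy]; linear_combination e)
  obtain ⟨b1, b2, hb⟩ := colon2 (K := K) (j := 1) (k := 0) (l := 3) (f := z ^ 2 * f2)
    (by decide) (by decide) (by rw [← ha, ← hy]; ring)
  obtain ⟨c1, c2, hc⟩ := colon2 (K := K) (j := 2) (k := 0) (l := 3) (f := z * f2)
    (by decide) (by decide) (by rw [← hb, ← hz]; ring)
  obtain ⟨a, b, hf2⟩ := colon2 (K := K) (j := 2) (k := 0) (l := 3) (f := f2)
    (by decide) (by decide) (by rw [← hc, ← hz])
  rw [← hx, ← hw] at hf2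
  obtain ⟨t, t1, t2⟩ := colon1 (K := K) (j := 0) (k := 3)
    (f := f0 * x + (f1 + y * z ^ 2 * a) * y)
    (a := -((f3 + y ^ 2 * z * b) * z + f4 * w)) (by decide)
    (by rw [← hx, ← hw]; linear_combination e - y ^ 2 * z ^ 2 * hf2)
  rw [← hw] at t1
  rw [← hx] at t2
  obtain ⟨al, be, ht⟩ := colon2 (K := K) (j := 0) (k := 2) (l := 3) (f := t)
    (a := -(f3 + y ^ 2 * z * b)) (b := -f4) (by decide) (by decide)
    (by rw [← hx, ← hw, ← hz]; linear_combination -t2)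
  obtain ⟨ga, de, ht'⟩ := colon2 (K := K) (j := 3) (k := 0) (l := 1) (f := t)
    (a := f0) (b := f1 + y * z ^ 2 * a) (by decide) (by decide)
    (by rw [← hx, ← hw, ← hy]; linear_combination -t1)
  rw [← hz, ← hw] at ht
  rw [← hx, ← hy] at ht'
  obtain ⟨p, q, r, hal⟩ := colon3 (K := K) (j := 2) (k := 3) (l := 0) (m := 1) (f := al)
    (a := -be) (b := ga) (c := de) (by decide) (by decide) (by decide)
    (by rw [← hx, ← hw, ← hy, ← hz]; linear_combination ht' - ht)
  rw [← hw, ← hx, ← hy] at hal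
  obtain ⟨s, u, hs⟩ := colon2 (K := K) (j := 3) (k := 0) (l := 1) (f := be + z * p)
    (a := ga - z * q) (b := de - z * r) (by decide) (by decide)
    (by rw [← hx, ← hw, ← hy]; linear_combination ht' - ht - z * hal)
  rw [← hx, ← hy] at hs
  have T : t = x * z * q + y * z * r + x * w * s + y * w * u := by
    linear_combination ht + z * hal + w * hs
  obtain ⟨g0, k1, k2⟩ := colon1 (K := K) (j := 0) (k := 1)
    (f := -(f0 - w * z * q - w ^ 2 * s))
    (a := f1 + y * z ^ 2 * a - w * z * r - w ^ 2 * u) (by decide)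
    (by rw [← hx, ← hy]; linear_combination -t1 - w * T)
  obtain ⟨g7, l1, l2⟩ := colon1 (K := K) (j := 2) (k := 3)
    (f := -(f3 + y ^ 2 * z * b + x ^ 2 * q + x * y * r))
    (a := f4 + x ^ 2 * s + x * y * u) (by decide)
    (by rw [← hz, ← hw]; linear_combination t2 + x * T)
  rw [← hy] at k1
  rw [← hx] at k2
  rw [← hw] at l1
  rw [← hz] at l2
  refine ⟨g0, -q, -s, a, -r, -u, -b, g7, ?_, ?_, ?_, ?_, ?_⟩
  · linear_combination k1
  · linear_combination -k2
  · linear_combination -hf2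
  · linear_combination l1
  · linear_combination -l2

/-- Example 4.3, Katthän's example: over `O = K[x,y,z,w]`,
with `I = (x², xy, y²z², zw, w²)`, the explicit complex
`0 → O → O⁵ → O⁸ → O⁵ → O` described below (free modules of ranks 1, 5, 8, 5 in
homological degrees 4, 3, 2, 1, with bases
`π^{abde}`; `π^{abd}, π^{abe}, π^{ade}, π^{bde}, π^{bcd}`;
`π^{ab}, π^{ad}, π^{ae}, π^{bc}, π^{bd}, π^{be}, π^{cd}, π^{de}`;
`π^a, π^b, π^c, π^d, π^e`) has vanishing consecutive compositions, `d₄` is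
injective, `ker d₃ = im d₄`, `ker d₂ = im d₃`, `ker d₁ = im d₂`, and
`im d₁ = I`; hence it is a free `O`-module resolution of `O/I` of length
four. -/
theorem stmt_10 (K : Type*) [Field K] :
    let O := MvPolynomial (Fin 4) K
    let x : O := MvPolynomial.X 0
    let y : O := MvPolynomial.X 1
    let z : O := MvPolynomial.X 2
    let w : O := MvPolynomial.X 3
    let I : Ideal O := Ideal.span {x ^ 2, x * y, y ^ 2 * z ^ 2, z * w, w ^ 2}
    -- d₁ on the basis `π^a, π^b, π^c, π^d, π^e`
    let d1 : (Fin 5 → O) → O := fun f =>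
      f 0 * x ^ 2 + f 1 * (x * y) + f 2 * (y ^ 2 * z ^ 2) + f 3 * (z * w) + f 4 * w ^ 2
    -- d₂ on the basis `π^{ab}, π^{ad}, π^{ae}, π^{bc}, π^{bd}, π^{be}, π^{cd}, π^{de}`
    let d2 : (Fin 8 → O) → (Fin 5 → O) := fun g =>
      ![-(y * g 0) - w * z * g 1 - w ^ 2 * g 2,
        x * g 0 - y * z ^ 2 * g 3 - w * z * g 4 - w ^ 2 * g 5,
        x * g 3 - w * g 6,
        x ^ 2 * g 1 + x * y * g 4 + y ^ 2 * z * g 6 - w * g 7,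
        x ^ 2 * g 2 + x * y * g 5 + z * g 7]
    -- d₃ on the basis `π^{abd}, π^{abe}, π^{ade}, π^{bde}, π^{bcd}`
    let d3 : (Fin 5 → O) → (Fin 8 → O) := fun h =>
      ![w * z * h 0 + w ^ 2 * h 1,
        -(y * h 0) + w * h 2,
        -(y * h 1) - z * h 2,
        w * h 4,
        x * h 0 + w * h 3 - y * z * h 4,
        x * h 1 - z * h 3,
        x * h 4,
        x ^ 2 * h 2 + x * y * h 3]
    -- d₄ on the basis `π^{abde}`
    let d4 : O → (Fin 5 → O) := fun p => ![-(w * p), z * p, -(y * p), x * p, 0]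
    (∀ g, d1 (d2 g) = 0) ∧
    (∀ h, d2 (d3 h) = 0) ∧
    (∀ p, d3 (d4 p) = 0) ∧
    Function.Injective d4 ∧
    (∀ h, d3 h = 0 ↔ ∃ p, d4 p = h) ∧
    (∀ g, d2 g = 0 ↔ ∃ h, d3 h = g) ∧
    (∀ f, d1 f = 0 ↔ ∃ g, d2 g = f) ∧
    (∀ p, (∃ f, d1 f = p) ↔ p ∈ I) := by
  intro O x y z w I d1 d2 d3 d4
  have c1 : ∀ g, d1 (d2 g) = 0 := by
    intro g; simp [d1, d2]; ring
  have c2 : ∀ h, d2 (d3 h) = 0 := by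
    intro h; funext i; fin_cases i <;> simp [d2, d3] <;> ring
  have c3 : ∀ p, d3 (d4 p) = 0 := by
    intro p; funext i; fin_cases i <;> simp [d3, d4] <;> ring
  refine ⟨c1, c2, c3, ?_, ?_, ?_, ?_, ?_⟩
  · intro p q h
    have h3 : x * p = x * q := congrFun h 3
    exact mul_left_cancel₀ (MvPolynomial.X_ne_zero 0) h3
  · intro h
    refine ⟨fun e => ?_, ?_⟩
    · obtain ⟨p, p0, p1, p2, p3, p4⟩ := exact3 (x := x) (y := y) (z := z) (w := w) rfl rfl
        (congrFun e 2) (congrFun e 4) (congrFun e 5) (congrFun e 6)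
      refine ⟨p, ?_⟩
      funext i
      fin_cases i
      exacts [p0, p1, p2, p3, p4]
    · rintro ⟨p, rfl⟩; exact c3 p
  · intro g
    refine ⟨fun e => ?_, ?_⟩
    · obtain ⟨h0, h1, h2, h3, h4, p0, p1, p2, p3, p4, p5, p6, p7⟩ :=
        exact2 (x := x) (y := y) (z := z) (w := w) rfl rfl rfl
          (congrFun e 0) (congrFun e 1) (congrFun e 2) (congrFun e 3)
      refine ⟨![h0, h1, h2, h3, h4], ?_⟩
      funext i
      fin_cases i
      exacts [p0, p1, p2, p3, p4, p5, p6, p7]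
    · rintro ⟨p, rfl⟩; exact c2 p
  · intro f
    refine ⟨fun e => ?_, ?_⟩
    · obtain ⟨g0, g1, g2, g3, g4, g5, g6, g7, p0, p1, p2, p3, p4⟩ :=
        exact1 (x := x) (y := y) (z := z) (w := w) rfl rfl rfl rfl e
      refine ⟨![g0, g1, g2, g3, g4, g5, g6, g7], ?_⟩
      funext i
      fin_cases i
      exacts [p0, p1, p2, p3, p4]
    · rintro ⟨p, rfl⟩; exact c1 p
  · intro p
    simp only [I, Ideal.mem_span_insert, Ideal.mem_span_singleton']
    constructor
    · rintro ⟨f, rfl⟩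
      refine ⟨f 0, _, ⟨f 1, _, ⟨f 2, _, ⟨f 3, _, ⟨f 4, rfl⟩, rfl⟩, rfl⟩, rfl⟩, ?_⟩
      simp only [d1]; ring
    · rintro ⟨a, _, ⟨b, _, ⟨c, _, ⟨d, _, ⟨e, rfl⟩, rfl⟩, rfl⟩, rfl⟩, rfl⟩
      refine ⟨![a, b, c, d, e], ?_⟩
      simp [d1]; ring
end
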